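/- Let A and B be separated cocomplete V-categories. The assignments f ↦ ξ_f with ξ_f(a,b) := B(b, f(a)), and ξ ↦ f_ξ with f_ξ(a) := sup_B(ξ(a,·)) (for a G-ideal ξ, the map b ↦ ξ(a,b) is a presheaf on B), are mutually inverse bijections between the set of maps f : A → B satisfying A(a,a') ≤ B(f(a'), f(a)) for all a,a' and B(b, f(sup_A φ)) = ⨅_a [φ(a), B(b, f(a))] for all b ∈ B, φ ∈ DA (i.e. cocontinuous V-functors A → B^op, equivalently left adjoint Galois maps) and the set of G-ideals on A ⊗ B. Thus A ⊗_V B ≅ V-Sup(A, B^op)^op. -/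

import Mathlib

/-!
The internal hom is right adjoint to multiplication (`le_qhom_iff`), so equalities in `V` are
proved by comparing lower bounds `u`: both sides unfold to families of inequalities
`u * v ≤ w`. The representable presheaf `B(·, b)` has supremum `b` (`sup_yoneda`).

For a Galois map `f`, both sides of the G-ideal equation for `ξ_f` unfold to
`u ⊗ φ(a) ⊗ ψ(b) ≤ B(b, f a)`. Conversely, a G-ideal evaluated at a representable in one
variable preserves suprema in the other variable alone (`IsGIdeal.le_left_iff`,
`IsGIdeal.le_right_iff`). Preservation in `B` applied to the row `ξ(a,·)` gives
`e ≤ ξ(a, f_ξ a)`, whence `ξ(a,b) = B(b, f_ξ a)`, i.e. `f_ξ a` represents the row;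
preservation in `A` is then the cocontinuity of `f_ξ`. Finally `f_{ξ_f} = f` is
`sup_yoneda`.
-/

/- `V` is a commutative quantale: a complete lattice with a commutative monoid
structure `(*, 1)` distributing over arbitrary suprema. -/
variable {V : Type*} [CommMonoid V] [CompleteLattice V] [IsQuantale V]

/-- The internal hom `[v,w]` of the commutative quantale `V`. -/
def qhom (v w : V) : V := sSup {u | u * v ≤ w}

/-- A separated cocomplete `V`-category: a `V`-category whose underlying order is
antisymmetric, equipped with `sup : DA → A` satisfying
`A(sup φ, a) = ⨅ a', [φ(a'), A(a',a)]`. -/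
structure SupCat (V : Type*) [CommMonoid V] [CompleteLattice V] [IsQuantale V] where
  carrier : Type*
  hom : carrier → carrier → V
  refl : ∀ x, 1 ≤ hom x x
  trans : ∀ x y z, hom x y * hom y z ≤ hom x z
  separated : ∀ x y, 1 ≤ hom x y → 1 ≤ hom y x → x = y
  sup : {φ : carrier → V // ∀ x y, hom x y * φ y ≤ φ x} → carrier
  hom_sup : ∀ (φ : {φ : carrier → V // ∀ x y, hom x y * φ y ≤ φ x}) (a : carrier),
      hom (sup φ) a = ⨅ a', qhom (φ.1 a') (hom a' a)

/-- The set of contravariant presheaves on a separated cocomplete `V`-category. -/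
abbrev PSh (A : SupCat V) := {φ : A.carrier → V // ∀ x y, A.hom x y * φ y ≤ φ x}

/-- A G-ideal on `A ⊗ B`: a presheaf `ξ` on the tensor product `V`-category `A ⊗ B`
such that `⨅_{a,b} [φ(a) ⊗ ψ(b), ξ(a,b)] = ξ(sup_A φ, sup_B ψ)` for all presheaves
`φ` on `A` and `ψ` on `B`. -/
def IsGIdeal (A B : SupCat V) (ξ : A.carrier → B.carrier → V) : Prop :=
  (∀ a a' b b', A.hom a a' * B.hom b b' * ξ a' b' ≤ ξ a b) ∧
  (∀ (φ : PSh A) (ψ : PSh B),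
      (⨅ a, ⨅ b, qhom (φ.1 a * ψ.1 b) (ξ a b)) = ξ (A.sup φ) (B.sup ψ))

/-- A cocontinuous `V`-functor `A → B^op`, i.e. a left adjoint Galois map:
`A(a,a') ≤ B(f(a'), f(a))` and `B(b, f(sup_A φ)) = ⨅_a [φ(a), B(b, f(a))]`. -/
def GaloisMap (A B : SupCat V) (f : A.carrier → B.carrier) : Prop :=
  (∀ a a', A.hom a a' ≤ B.hom (f a') (f a)) ∧
  (∀ (b : B.carrier) (φ : PSh A),
      B.hom b (f (A.sup φ)) = ⨅ a, qhom (φ.1 a) (B.hom b (f a)))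

theorem le_qhom_iff {u v w : V} : u ≤ qhom v w ↔ u * v ≤ w := by
  constructor
  · intro h
    refine (mul_le_mul' h le_rfl).trans ?_
    rw [qhom, IsQuantale.sSup_mul_distrib]
    exact iSup₂_le fun x hx => hx
  · exact fun h => le_sSup h

/-- The presheaf `A(·, a)` represented by `a`. -/
def yoneda (A : SupCat V) (a : A.carrier) : PSh A :=
  ⟨fun x => A.hom x a, fun x y => A.trans x y a⟩

theorem le_hom_sup_iff (A : SupCat V) (φ : PSh A) (a : A.carrier) (u : V) :
    u ≤ A.hom (A.sup φ) a ↔ ∀ x, u * φ.1 x ≤ A.hom x a := by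
  rw [A.hom_sup, le_iInf_iff]
  exact forall_congr' fun x => le_qhom_iff

/-- The supremum is an upper bound for its presheaf. -/
theorem le_sup (A : SupCat V) (φ : PSh A) (x : A.carrier) : φ.1 x ≤ A.hom x (A.sup φ) := by
  simpa using (le_hom_sup_iff A φ (A.sup φ) 1).1 (A.refl _) x

theorem sup_yoneda (A : SupCat V) (a : A.carrier) : A.sup (yoneda A a) = a := by
  apply A.separated
  · rw [le_hom_sup_iff]
    intro x
    simp [yoneda]
  · exact (A.refl a).trans (le_sup A (yoneda A a) a)

theorem IsGIdeal.le_iff {A B : SupCat V} {ξ : A.carrier → B.carrier → V}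
    (h : IsGIdeal A B ξ) (φ : PSh A) (ψ : PSh B) (u : V) :
    u ≤ ξ (A.sup φ) (B.sup ψ) ↔ ∀ a b, u * (φ.1 a * ψ.1 b) ≤ ξ a b := by
  rw [← h.2]
  simp only [le_iInf_iff, le_qhom_iff]

theorem IsGIdeal.left {A B : SupCat V} {ξ : A.carrier → B.carrier → V}
    (h : IsGIdeal A B ξ) (a a' : A.carrier) (b : B.carrier) :
    A.hom a a' * ξ a' b ≤ ξ a b := by
  refine le_trans (mul_le_mul' ?_ le_rfl) (h.1 a a' b b)
  simpa using mul_le_mul' (le_refl (A.hom a a')) (B.refl b)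

theorem IsGIdeal.right {A B : SupCat V} {ξ : A.carrier → B.carrier → V}
    (h : IsGIdeal A B ξ) (a : A.carrier) (b b' : B.carrier) :
    B.hom b b' * ξ a b' ≤ ξ a b := by
  refine le_trans (mul_le_mul' ?_ le_rfl) (h.1 a a b b')
  simpa using mul_le_mul' (A.refl a) (le_refl (B.hom b b'))

/-- A G-ideal turns suprema in its first variable into weighted infima. -/
theorem IsGIdeal.le_left_iff {A B : SupCat V} {ξ : A.carrier → B.carrier → V}
    (h : IsGIdeal A B ξ) (φ : PSh A) (b : B.carrier) (u : V) :
    u ≤ ξ (A.sup φ) b ↔ ∀ a, u * φ.1 a ≤ ξ a b := by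
  have key := h.le_iff φ (yoneda B b) u
  rw [sup_yoneda] at key
  rw [key]
  constructor
  · intro H a
    refine le_trans ?_ (H a b)
    simpa [mul_assoc, yoneda] using mul_le_mul' (le_refl (u * φ.1 a)) (B.refl b)
  · intro H a b'
    calc u * (φ.1 a * B.hom b' b) = B.hom b' b * (u * φ.1 a) := by ac_rfl
      _ ≤ B.hom b' b * ξ a b := mul_le_mul' le_rfl (H a)
      _ ≤ ξ a b' := h.right a b' b

/-- A G-ideal turns suprema in its second variable into weighted infima. -/
theorem IsGIdeal.le_right_iff {A B : SupCat V} {ξ : A.carrier → B.carrier → V}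
    (h : IsGIdeal A B ξ) (a : A.carrier) (ψ : PSh B) (u : V) :
    u ≤ ξ a (B.sup ψ) ↔ ∀ b, u * ψ.1 b ≤ ξ a b := by
  have key := h.le_iff (yoneda A a) ψ u
  rw [sup_yoneda] at key
  rw [key]
  constructor
  · intro H b
    refine le_trans ?_ (H a b)
    have := mul_le_mul' (A.refl a) (le_refl (u * ψ.1 b))
    rw [one_mul, mul_left_comm] at this
    exact this
  · intro H a' b
    calc u * (A.hom a' a * ψ.1 b) = A.hom a' a * (u * ψ.1 b) := by ac_rfl
      _ ≤ A.hom a' a * ξ a b := mul_le_mul' le_rfl (H b)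
      _ ≤ ξ a' b := h.left a' a b

theorem GaloisMap.isGIdeal {A B : SupCat V} {f : A.carrier → B.carrier}
    (hf : GaloisMap A B f) : IsGIdeal A B (fun a b => B.hom b (f a)) := by
  constructor
  · intro a a' b b'
    calc A.hom a a' * B.hom b b' * B.hom b' (f a')
        = (B.hom b b' * B.hom b' (f a')) * A.hom a a' := by ac_rfl
      _ ≤ B.hom b (f a') * B.hom (f a') (f a) := mul_le_mul' (B.trans _ _ _) (hf.1 a a')
      _ ≤ B.hom b (f a) := B.trans _ _ _
  · intro φ ψ
    refine eq_of_forall_le_iff fun u => ?_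
    simp only [hf.2, le_iInf_iff, le_qhom_iff, le_hom_sup_iff, mul_assoc]

/-- The supremum of the row `ξ(a,·)` represents that row. -/
theorem IsGIdeal.eq_hom_sup {A B : SupCat V} {ξ : A.carrier → B.carrier → V}
    (h : IsGIdeal A B ξ) (a : A.carrier) (b : B.carrier) :
    ξ a b = B.hom b (B.sup ⟨fun b => ξ a b, h.right a⟩) := by
  apply le_antisymm
  · exact le_sup B ⟨fun b => ξ a b, h.right a⟩ b
  · have unit : 1 ≤ ξ a (B.sup ⟨fun b => ξ a b, h.right a⟩) := by
      rw [h.le_right_iff]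
      intro b
      simp
    refine le_trans ?_ (h.right a b (B.sup ⟨fun b => ξ a b, h.right a⟩))
    simpa using mul_le_mul' (le_refl (B.hom b (B.sup ⟨fun b => ξ a b, h.right a⟩))) unit

/-- `f ↦ ξ_f := B(·, f(·))` and `ξ ↦ f_ξ := (a ↦ sup_B ξ(a,·))`
are mutually inverse bijections between cocontinuous `V`-functors `A → B^op` and
G-ideals on `A ⊗ B`; thus `A ⊗_V B ≅ V-Sup(A, B^op)^op`. -/
theorem stmt11 (A B : SupCat V) :
    -- f ↦ ξ_f lands in G-ideals
    (∀ f : A.carrier → B.carrier, GaloisMap A B f →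
        IsGIdeal A B (fun a b => B.hom b (f a))) ∧
    -- each row of a G-ideal is a presheaf on B, so f_ξ is defined
    (∀ ξ : A.carrier → B.carrier → V, IsGIdeal A B ξ →
        ∀ (a : A.carrier) (x y : B.carrier), B.hom x y * ξ a y ≤ ξ a x) ∧
    -- ξ ↦ f_ξ lands in Galois maps, and ξ_{f_ξ} = ξ
    (∀ ξ : A.carrier → B.carrier → V, IsGIdeal A B ξ →
        ∀ f : A.carrier → B.carrier,
          (∀ (a : A.carrier) (χ : PSh B), χ.1 = (fun b => ξ a b) → f a = B.sup χ) →
          GaloisMap A B f ∧ ∀ a b, ξ a b = B.hom b (f a)) ∧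
    -- f_{ξ_f} = f
    (∀ f : A.carrier → B.carrier, GaloisMap A B f →
        ∀ f' : A.carrier → B.carrier,
          (∀ (a : A.carrier) (χ : PSh B), χ.1 = (fun b => B.hom b (f a)) → f' a = B.sup χ) →
          f' = f) := by
  refine ⟨fun f hf => hf.isGIdeal, fun ξ h => h.right, fun ξ h f hf => ?_, ?_⟩
  · have rep : ∀ a b, ξ a b = B.hom b (f a) := by
      intro a b
      rw [hf a ⟨fun b => ξ a b, h.right a⟩ rfl]
      exact h.eq_hom_sup a b
    refine ⟨⟨fun a a' => ?_, fun b φ => ?_⟩, rep⟩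
    · rw [← rep]
      refine le_trans ?_ (h.left a a' (f a'))
      have unit : 1 ≤ ξ a' (f a') := by
        rw [rep]
        exact B.refl _
      simpa using mul_le_mul' (le_refl (A.hom a a')) unit
    · refine eq_of_forall_le_iff fun u => ?_
      simp only [← rep, le_iInf_iff, le_qhom_iff]
      exact h.le_left_iff φ b u
  · intro f _ f' hf'
    funext a
    rw [hf' a (yoneda B (f a)) rfl]
    exact sup_yoneda B (f a)
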